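/- Let m ≥ 2 and let z : ℝ² \ {0} → ℝ be given in polar coordinates s = r cos θ, t = r sin θ by z = r^m P(θ) with P ∈ C^∞(S¹). Then the Hessian determinant of z satisfies the identity z_ss z_tt − z_st² = r^{2m−4} (m−1) [m² P(θ)² + m P(θ) P''(θ) − (m−1) P'(θ)²] for all r > 0 and all θ. -/

import Mathlib

noncomputable section

/-- Dot product of two 3-vectors (ℂ-bilinear extension when over ℂ). -/
def dot3 {R : Type*} [CommRing R] (v w : Fin 3 → R) : R :=
  v 0 * w 0 + v 1 * w 1 + v 2 * w 2

/-- Cross product of two 3-vectors (ℂ-bilinear extension when over ℂ). -/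
def cross3 {R : Type*} [CommRing R] (v w : Fin 3 → R) : Fin 3 → R :=
  ![v 1 * w 2 - v 2 * w 1, v 2 * w 0 - v 0 * w 2, v 0 * w 1 - v 1 * w 0]

/-- Euclidean norm of a real 3-vector. -/
def enorm3 (v : Fin 3 → ℝ) : ℝ := Real.sqrt (dot3 v v)

/-- Partial derivative with respect to the first variable `s`. -/
def pds {E : Type*} [NormedAddCommGroup E] [NormedSpace ℝ E]
    (f : ℝ × ℝ → E) (p : ℝ × ℝ) : E :=
  deriv (fun s => f (s, p.2)) p.1

/-- Partial derivative with respect to the second variable `t`. -/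
def pdt {E : Type*} [NormedAddCommGroup E] [NormedSpace ℝ E]
    (f : ℝ × ℝ → E) (p : ℝ × ℝ) : E :=
  deriv (fun t => f (p.1, t)) p.2

/-- Componentwise `s`-derivative of a 3-vector valued map. -/
def vds (V : ℝ × ℝ → Fin 3 → ℝ) (p : ℝ × ℝ) : Fin 3 → ℝ := fun i => pds (fun q => V q i) p

/-- Componentwise `t`-derivative of a 3-vector valued map. -/
def vdt (V : ℝ × ℝ → Fin 3 → ℝ) (p : ℝ × ℝ) : Fin 3 → ℝ := fun i => pdt (fun q => V q i) p

/-!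
The matrix of the Hessian of `z` in the orthonormal frame of unit radial and angular vectors has
the entries `z_rr`, `(z_rθ - z_θ / r) / r` and `(z_θθ / r + z_r) / r`. The Hessian determinant does
not depend on the orthonormal frame, so it can be read off from these, and for `z = r ^ m * P θ`
all the derivatives in them are explicit.
-/

open Real Topology

theorem eventually_differentiableAt_of_contDiffAt {F G : Type*} [NormedAddCommGroup F]
    [NormedSpace ℝ F] [NormedAddCommGroup G] [NormedSpace ℝ G] {h : F → G} {x : F}
    {n : WithTop ℕ∞} (hh : ContDiffAt ℝ n h x) (hn : 1 ≤ n) :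
    ∀ᶠ y in 𝓝 x, DifferentiableAt ℝ h y :=
  ((hh.of_le hn).eventually (by simp)).mono fun _ hy ↦ hy.differentiableAt one_ne_zero

section PartialDerivatives

variable {E : Type*} [NormedAddCommGroup E] [NormedSpace ℝ E] {f g : ℝ × ℝ → E} {p : ℝ × ℝ}

theorem pds_eq_fderiv (hf : DifferentiableAt ℝ f p) : pds f p = fderiv ℝ f p (1, 0) :=
  (hf.hasFDerivAt.comp_hasDerivAt (f := fun s ↦ (s, p.2)) p.1
    ((hasDerivAt_id _).prodMk (hasDerivAt_const _ _))).deriv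

theorem pdt_eq_fderiv (hf : DifferentiableAt ℝ f p) : pdt f p = fderiv ℝ f p (0, 1) :=
  (hf.hasFDerivAt.comp_hasDerivAt (f := fun t ↦ (p.1, t)) p.2
    ((hasDerivAt_const _ _).prodMk (hasDerivAt_id _))).deriv

theorem hasDerivAt_comp_prodMk {u v : ℝ → ℝ} {u' v' x : ℝ}
    (hf : DifferentiableAt ℝ f (u x, v x)) (hu : HasDerivAt u u' x) (hv : HasDerivAt v v' x) :
    HasDerivAt (fun y ↦ f (u y, v y)) (u' • pds f (u x, v x) + v' • pdt f (u x, v x)) x := by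
  have hdir : ((u', v') : ℝ × ℝ) = u' • (1, 0) + v' • (0, 1) := by simp
  rw [pds_eq_fderiv hf, pdt_eq_fderiv hf, ← map_smul, ← map_smul, ← map_add, ← hdir]
  exact hf.hasFDerivAt.comp_hasDerivAt x (hu.prodMk hv)

theorem pds_congr (h : f =ᶠ[𝓝 p] g) : pds f =ᶠ[𝓝 p] pds g := by
  filter_upwards [h.eventuallyEq_nhds] with q hq
  have hcont : ContinuousAt (fun s : ℝ ↦ (s, q.2)) q.1 := by fun_prop
  exact (hq.comp_tendsto hcont).deriv_eq

theorem pdt_congr (h : f =ᶠ[𝓝 p] g) : pdt f =ᶠ[𝓝 p] pdt g := by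
  filter_upwards [h.eventuallyEq_nhds] with q hq
  have hcont : ContinuousAt (fun t : ℝ ↦ (q.1, t)) q.2 := by fun_prop
  exact (hq.comp_tendsto hcont).deriv_eq

theorem pds_eventuallyEq_fderiv {n : WithTop ℕ∞} (hf : ContDiffAt ℝ n f p) (hn : 1 ≤ n) :
    pds f =ᶠ[𝓝 p] fun q ↦ fderiv ℝ f q (1, 0) :=
  (eventually_differentiableAt_of_contDiffAt hf hn).mono fun _ ↦ pds_eq_fderiv

theorem pdt_eventuallyEq_fderiv {n : WithTop ℕ∞} (hf : ContDiffAt ℝ n f p) (hn : 1 ≤ n) :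
    pdt f =ᶠ[𝓝 p] fun q ↦ fderiv ℝ f q (0, 1) :=
  (eventually_differentiableAt_of_contDiffAt hf hn).mono fun _ ↦ pdt_eq_fderiv

theorem contDiffAt_pds {k n : WithTop ℕ∞} (hf : ContDiffAt ℝ n f p) (hkn : k + 1 ≤ n) :
    ContDiffAt ℝ k (pds f) p :=
  ((hf.fderiv_right hkn).clm_apply contDiffAt_const).congr_of_eventuallyEq
    (pds_eventuallyEq_fderiv hf (le_add_self.trans hkn))

theorem contDiffAt_pdt {k n : WithTop ℕ∞} (hf : ContDiffAt ℝ n f p) (hkn : k + 1 ≤ n) :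
    ContDiffAt ℝ k (pdt f) p :=
  ((hf.fderiv_right hkn).clm_apply contDiffAt_const).congr_of_eventuallyEq
    (pdt_eventuallyEq_fderiv hf (le_add_self.trans hkn))

theorem differentiableAt_pds (hf : ContDiffAt ℝ 2 f p) : DifferentiableAt ℝ (pds f) p :=
  (contDiffAt_pds hf one_add_one_eq_two.le).differentiableAt one_ne_zero

theorem differentiableAt_pdt (hf : ContDiffAt ℝ 2 f p) : DifferentiableAt ℝ (pdt f) p :=
  (contDiffAt_pdt hf one_add_one_eq_two.le).differentiableAt one_ne_zero

theorem pds_pdt_comm (hf : ContDiffAt ℝ 2 f p) : pds (pdt f) p = pdt (pds f) p := by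
  have hf' : DifferentiableAt ℝ (fderiv ℝ f) p :=
    (hf.fderiv_right one_add_one_eq_two.le).differentiableAt one_ne_zero
  have fderiv_apply (v w : ℝ × ℝ) :
      fderiv ℝ (fun q ↦ fderiv ℝ f q v) p w = fderiv ℝ (fderiv ℝ f) p w v := by
    simp [fderiv_clm_apply hf' (differentiableAt_const v)]
  rw [pds_eq_fderiv (differentiableAt_pdt hf), pdt_eq_fderiv (differentiableAt_pds hf),
    (pds_eventuallyEq_fderiv hf one_le_two).fderiv_eq,
    (pdt_eventuallyEq_fderiv hf one_le_two).fderiv_eq, fderiv_apply, fderiv_apply]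
  exact hf.isSymmSndFDerivAt (by simp) _ _

end PartialDerivatives

section PolarCoordinates

variable {E : Type*} [NormedAddCommGroup E] [NormedSpace ℝ E] {f : ℝ × ℝ → E} {q : ℝ × ℝ}

theorem polarCoord_symm_ne_zero (hq : q.1 ≠ 0) : polarCoord.symm q ≠ 0 := by
  intro h
  have hcos : cos q.2 = 0 := (mul_eq_zero.mp (congrArg Prod.fst h)).resolve_left hq
  have hsin : sin q.2 = 0 := (mul_eq_zero.mp (congrArg Prod.snd h)).resolve_left hq
  simpa [hcos, hsin] using sin_sq_add_cos_sq q.2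

theorem hasDerivAt_polarCoord_radial (hf : DifferentiableAt ℝ f (polarCoord.symm q)) :
    HasDerivAt (fun r ↦ f (polarCoord.symm (r, q.2)))
      (cos q.2 • pds f (polarCoord.symm q) + sin q.2 • pdt f (polarCoord.symm q)) q.1 :=
  hasDerivAt_comp_prodMk (u := fun r ↦ r * cos q.2) (v := fun r ↦ r * sin q.2) hf
    (hasDerivAt_mul_const _) (hasDerivAt_mul_const _)

theorem hasDerivAt_polarCoord_angular (hf : DifferentiableAt ℝ f (polarCoord.symm q)) :
    HasDerivAt (fun θ ↦ f (polarCoord.symm (q.1, θ)))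
      ((q.1 * -sin q.2) • pds f (polarCoord.symm q)
        + (q.1 * cos q.2) • pdt f (polarCoord.symm q)) q.2 :=
  hasDerivAt_comp_prodMk (u := fun θ ↦ q.1 * cos θ) (v := fun θ ↦ q.1 * sin θ) hf
    ((hasDerivAt_cos _).const_mul _) ((hasDerivAt_sin _).const_mul _)

theorem pds_comp_polarCoord_symm (hf : DifferentiableAt ℝ f (polarCoord.symm q)) :
    pds (f ∘ polarCoord.symm) q
      = cos q.2 • pds f (polarCoord.symm q) + sin q.2 • pdt f (polarCoord.symm q) :=
  (hasDerivAt_polarCoord_radial hf).deriv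

theorem pdt_comp_polarCoord_symm (hf : DifferentiableAt ℝ f (polarCoord.symm q)) :
    pdt (f ∘ polarCoord.symm) q
      = (q.1 * -sin q.2) • pds f (polarCoord.symm q)
        + (q.1 * cos q.2) • pdt f (polarCoord.symm q) :=
  (hasDerivAt_polarCoord_angular hf).deriv

theorem eventually_differentiableAt_polarCoord_symm
    (hf : ContDiffAt ℝ 2 f (polarCoord.symm q)) :
    ∀ᶠ q' in 𝓝 q, DifferentiableAt ℝ f (polarCoord.symm q') :=
  continuous_polarCoord_symm.continuousAt.eventually
    (eventually_differentiableAt_of_contDiffAt hf one_le_two)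

theorem pds_pds_comp_polarCoord_symm (hf : ContDiffAt ℝ 2 f (polarCoord.symm q)) :
    pds (pds (f ∘ polarCoord.symm)) q
      = cos q.2 ^ 2 • pds (pds f) (polarCoord.symm q)
        + (2 * cos q.2 * sin q.2) • pdt (pds f) (polarCoord.symm q)
        + sin q.2 ^ 2 • pdt (pdt f) (polarCoord.symm q) := by
  have hderiv := ((hasDerivAt_polarCoord_radial (differentiableAt_pds hf)).const_smul
    (cos q.2)).add ((hasDerivAt_polarCoord_radial (differentiableAt_pdt hf)).const_smul (sin q.2))
  have hfirst := (eventually_differentiableAt_polarCoord_symm hf).mono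
    fun _ ↦ pds_comp_polarCoord_symm
  rw [(pds_congr hfirst).eq_of_nhds]
  refine hderiv.deriv.trans ?_
  rw [pds_pdt_comm hf]
  module

theorem pdt_pds_comp_polarCoord_symm (hf : ContDiffAt ℝ 2 f (polarCoord.symm q)) :
    pdt (pds (f ∘ polarCoord.symm)) q
      = q.1 • ((cos q.2 * sin q.2) • (pdt (pdt f) (polarCoord.symm q)
            - pds (pds f) (polarCoord.symm q))
          + (cos q.2 ^ 2 - sin q.2 ^ 2) • pdt (pds f) (polarCoord.symm q))
        - sin q.2 • pds f (polarCoord.symm q) + cos q.2 • pdt f (polarCoord.symm q) := by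
  have hderiv := ((hasDerivAt_cos q.2).smul
    (hasDerivAt_polarCoord_angular (differentiableAt_pds hf))).add
    ((hasDerivAt_sin q.2).smul (hasDerivAt_polarCoord_angular (differentiableAt_pdt hf)))
  have hfirst := (eventually_differentiableAt_polarCoord_symm hf).mono
    fun _ ↦ pds_comp_polarCoord_symm
  rw [(pdt_congr hfirst).eq_of_nhds]
  refine hderiv.deriv.trans ?_
  rw [pds_pdt_comm hf]
  module

theorem pdt_pdt_comp_polarCoord_symm (hf : ContDiffAt ℝ 2 f (polarCoord.symm q)) :
    pdt (pdt (f ∘ polarCoord.symm)) q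
      = q.1 ^ 2 • (sin q.2 ^ 2 • pds (pds f) (polarCoord.symm q)
          - (2 * cos q.2 * sin q.2) • pdt (pds f) (polarCoord.symm q)
          + cos q.2 ^ 2 • pdt (pdt f) (polarCoord.symm q))
        - q.1 • (cos q.2 • pds f (polarCoord.symm q) + sin q.2 • pdt f (polarCoord.symm q)) := by
  have hderiv := (((hasDerivAt_sin q.2).fun_neg.const_mul q.1).smul
    (hasDerivAt_polarCoord_angular (differentiableAt_pds hf))).add
    (((hasDerivAt_cos q.2).const_mul q.1).smul
      (hasDerivAt_polarCoord_angular (differentiableAt_pdt hf)))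
  have hfirst := (eventually_differentiableAt_polarCoord_symm hf).mono
    fun _ ↦ pdt_comp_polarCoord_symm
  rw [(pdt_congr hfirst).eq_of_nhds]
  refine hderiv.deriv.trans ?_
  rw [pds_pdt_comm hf]
  module

end PolarCoordinates

section HessianDeterminant

/-- The Hessian determinant `f_ss f_tt - f_st²` of a function of two real variables. The mixed
derivative is taken first in `s`, then in `t`. -/
def hessianDet (f : ℝ × ℝ → ℝ) (p : ℝ × ℝ) : ℝ :=
  pds (pds f) p * pdt (pdt f) p - pdt (pds f) p ^ 2

theorem hessianDet_polarCoord_symm {f : ℝ × ℝ → ℝ} {q : ℝ × ℝ} (hq : q.1 ≠ 0)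
    (hf : ContDiffAt ℝ 2 f (polarCoord.symm q)) :
    hessianDet f (polarCoord.symm q)
      = pds (pds (f ∘ polarCoord.symm)) q
          * ((pdt (pdt (f ∘ polarCoord.symm)) q / q.1 + pds (f ∘ polarCoord.symm) q) / q.1)
        - ((pdt (pds (f ∘ polarCoord.symm)) q - pdt (f ∘ polarCoord.symm) q / q.1) / q.1) ^ 2 := by
  have hf₁ : DifferentiableAt ℝ f (polarCoord.symm q) := hf.differentiableAt two_ne_zero
  set a := pds (pds f) (polarCoord.symm q)
  set b := pdt (pds f) (polarCoord.symm q)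
  set d := pdt (pdt f) (polarCoord.symm q)
  have hradial : pds (pds (f ∘ polarCoord.symm)) q
      = cos q.2 ^ 2 * a + 2 * cos q.2 * sin q.2 * b + sin q.2 ^ 2 * d :=
    pds_pds_comp_polarCoord_symm hf
  have hmixed : (pdt (pds (f ∘ polarCoord.symm)) q - pdt (f ∘ polarCoord.symm) q / q.1) / q.1
      = cos q.2 * sin q.2 * (d - a) + (cos q.2 ^ 2 - sin q.2 ^ 2) * b := by
    rw [pdt_pds_comp_polarCoord_symm hf, pdt_comp_polarCoord_symm hf₁]
    simp only [smul_eq_mul]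
    field_simp
    ring
  have hangular : (pdt (pdt (f ∘ polarCoord.symm)) q / q.1 + pds (f ∘ polarCoord.symm) q) / q.1
      = sin q.2 ^ 2 * a - 2 * cos q.2 * sin q.2 * b + cos q.2 ^ 2 * d := by
    rw [pdt_pdt_comp_polarCoord_symm hf, pds_comp_polarCoord_symm hf₁]
    simp only [smul_eq_mul]
    field_simp
    ring
  rw [hessianDet, hradial, hmixed, hangular]
  linear_combination
    -(cos q.2 ^ 2 + sin q.2 ^ 2 + 1) * (a * d - b ^ 2) * sin_sq_add_cos_sq q.2

theorem pds_mul_separated (u v : ℝ → ℝ) :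
    pds (fun q ↦ u q.1 * v q.2) = fun q ↦ deriv u q.1 * v q.2 :=
  funext fun q ↦ deriv_mul_const_field (u := u) (v q.2)

theorem pdt_mul_separated (u v : ℝ → ℝ) :
    pdt (fun q ↦ u q.1 * v q.2) = fun q ↦ u q.1 * deriv v q.2 :=
  funext fun q ↦ deriv_const_mul_field (u q.1) (v := v)

theorem hessianDet_of_polar_separated {f : ℝ × ℝ → ℝ} {u v : ℝ → ℝ} {r θ : ℝ} (hr : r ≠ 0)
    (hf : ContDiffAt ℝ 2 f (polarCoord.symm (r, θ)))
    (hsep : f ∘ polarCoord.symm =ᶠ[𝓝 (r, θ)] fun q ↦ u q.1 * v q.2) :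
    hessianDet f (polarCoord.symm (r, θ))
      = deriv (deriv u) r * v θ * ((u r * deriv (deriv v) θ / r + deriv u r * v θ) / r)
        - ((deriv u r * deriv v θ - u r * deriv v θ / r) / r) ^ 2 := by
  rw [hessianDet_polarCoord_symm hr hf, (pds_congr (pds_congr hsep)).eq_of_nhds,
    (pdt_congr (pdt_congr hsep)).eq_of_nhds, (pdt_congr (pds_congr hsep)).eq_of_nhds,
    (pds_congr hsep).eq_of_nhds, (pdt_congr hsep).eq_of_nhds]
  simp only [pds_mul_separated, pdt_mul_separated]

end HessianDeterminant

theorem deriv_deriv_rpow_const (m r : ℝ) :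
    deriv (deriv fun x ↦ x ^ m) r = m * ((m - 1) * r ^ (m - 2)) := by
  rw [Real.deriv_rpow_const', deriv_const_mul_field, Real.deriv_rpow_const,
    sub_sub, one_add_one_eq_two]

theorem hessian_det_of_homogeneous_general {m r θ : ℝ} {P : ℝ → ℝ} {z : ℝ × ℝ → ℝ} (hr : 0 < r)
    (hz : ContDiffAt ℝ 2 z (polarCoord.symm (r, θ)))
    (hpolar : z ∘ polarCoord.symm =ᶠ[𝓝 (r, θ)] fun q ↦ q.1 ^ m * P q.2) :
    hessianDet z (polarCoord.symm (r, θ))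
      = r ^ (2 * m - 4) * (m - 1)
          * (m ^ 2 * P θ ^ 2 + m * P θ * deriv (deriv P) θ - (m - 1) * (deriv P θ) ^ 2) := by
  have hpow : r ^ m = r ^ (m - 2) * r ^ 2 := by
    rw [← rpow_add_natCast hr.ne']
    norm_num
  have hpow₁ : r ^ (m - 1) = r ^ (m - 2) * r := by
    rw [← rpow_add_one hr.ne']
    ring_nf
  have hpow₂ : r ^ (2 * m - 4) = (r ^ (m - 2)) ^ 2 := by
    rw [← rpow_mul_natCast hr.le]
    ring_nf
  rw [hessianDet_of_polar_separated (u := fun x ↦ x ^ m) hr.ne' hz hpolar, deriv_deriv_rpow_const,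
    Real.deriv_rpow_const, hpow, hpow₁, hpow₂]
  field_simp
  ring

/-- For a homogeneous function `z = r^m P(θ)` of order `m ≥ 2` (in polar
coordinates `s = r cos θ`, `t = r sin θ`), the Hessian determinant satisfies
`z_ss z_tt − z_st² = r^{2m−4}(m−1)[m²P² + m P P'' − (m−1)P'²]`. -/
theorem hessian_det_of_homogeneous
    (m : ℝ) (hm : 2 ≤ m)
    (P : ℝ → ℝ) (hP : ContDiff ℝ (⊤ : ℕ∞) P)
    (hper : ∀ θ, P (θ + 2 * Real.pi) = P θ)
    (z : ℝ × ℝ → ℝ)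
    (hz : ∀ r : ℝ, 0 < r → ∀ θ : ℝ, z (r * Real.cos θ, r * Real.sin θ) = r ^ m * P θ)
    (hzsm : ContDiffOn ℝ (⊤ : ℕ∞) z {p : ℝ × ℝ | p ≠ 0}) :
    ∀ r : ℝ, 0 < r → ∀ θ : ℝ,
      pds (pds z) (r * Real.cos θ, r * Real.sin θ)
          * pdt (pdt z) (r * Real.cos θ, r * Real.sin θ)
        - (pdt (pds z) (r * Real.cos θ, r * Real.sin θ)) ^ 2
      = r ^ (2 * m - 4) * (m - 1)
          * (m ^ 2 * P θ ^ 2 + m * P θ * deriv (deriv P) θ - (m - 1) * (deriv P θ) ^ 2) := by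
  intro r hr θ
  refine hessian_det_of_homogeneous_general hr ?_ ?_
  · have hp : polarCoord.symm (r, θ) ≠ 0 := polarCoord_symm_ne_zero hr.ne'
    exact (hzsm.contDiffAt (isOpen_ne.mem_nhds hp)).of_le
      (WithTop.coe_le_coe.mpr (le_top : (2 : ℕ∞) ≤ ⊤))
  · filter_upwards [continuousAt_fst.eventually_const_lt hr] with q hq using hz q.1 hq q.2
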